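/- arXiv:2202.09178 — 5 statements merged into one kernel-verified Lean document; each statement's English description precedes it below -/
import Mathlib

section
/- For all sufficiently small τ ∈ (0,1), there exists a constant C ∈ (0,1) such that for all sufficiently small R > 0, all z ∈ ℝ, and all k ∈ ℕ with τ^k < C·R², one has N(z,R,k,τ) ≈ τ^{-k}·R, where the implicit constants in ≈ depend only on τ (and not on z, R, k). More precisely: there exists τ₀ ∈ (0,1) such that for every τ ∈ (0,τ₀) there exist C ∈ (0,1), constants 0 < a ≤ b and R₀ > 0 such that for all R ∈ (0,R₀), all z ∈ ℝ, and all k ∈ ℕ with τ^k < C·R², one has a·τ^{-k}·R ≤ N(z,R,k,τ) ≤ b·τ^{-k}·R. -/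
/-- `N z R τ k` is the number of reduced rationals `p/q` (with `p ∈ ℤ`, `q ∈ ℕ`,
`gcd(p,q) = 1`) whose denominator satisfies `τ⁻ᵏ < q² ≤ τ⁻⁽ᵏ⁺¹⁾` and which lie
within distance `R` of `z`. -/
noncomputable def ratCount (z R τ : ℝ) (k : ℕ) : ℕ :=
  Set.ncard {pq : ℤ × ℕ |
    Int.gcd pq.1 pq.2 = 1 ∧
    (τ ^ k)⁻¹ < (pq.2 : ℝ) ^ 2 ∧ (pq.2 : ℝ) ^ 2 ≤ (τ ^ (k + 1))⁻¹ ∧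
    |(pq.1 : ℝ) / (pq.2 : ℝ) - z| ≤ R}

/-- Reduced fractions near `z` with denominators at most `n`. -/
def fareySet (z R : ℝ) (n : ℕ) : Set (ℤ × ℕ) :=
  {pq | Int.gcd pq.1 pq.2 = 1 ∧ 1 ≤ pq.2 ∧ pq.2 ≤ n ∧ |(pq.1 : ℝ) / (pq.2 : ℝ) - z| ≤ R}

lemma farey_spacing {p p' : ℤ} {q q' n : ℕ} (h : Int.gcd p q = 1) (h' : Int.gcd p' q' = 1)
    (hq : 1 ≤ q) (hq' : 1 ≤ q') (hn : q ≤ n) (hn' : q' ≤ n)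
    (hlt : |(p : ℝ) / q * (n : ℝ) ^ 2 - (p' : ℝ) / q' * (n : ℝ) ^ 2| < 1) : p = p' ∧ q = q' := by
  have hqR : (0 : ℝ) < q := by exact_mod_cast hq
  have hqR' : (0 : ℝ) < q' := by exact_mod_cast hq'
  have hnR : (q : ℝ) ≤ n := by exact_mod_cast hn
  have hnR' : (q' : ℝ) ≤ n := by exact_mod_cast hn'
  have key : p * q' - p' * q = 0 := by
    by_contra hne
    have h1 : (1 : ℝ) ≤ |(p : ℝ) * q' - p' * q| := by
      have := Int.one_le_abs hne
      exact_mod_cast this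
    have e : (p : ℝ) / q * (n : ℝ) ^ 2 - (p' : ℝ) / q' * (n : ℝ) ^ 2
        = ((p : ℝ) * q' - p' * q) * ((n : ℝ) ^ 2 / (q * q')) := by
      field_simp
    have h2 : (1 : ℝ) ≤ (n : ℝ) ^ 2 / (q * q') := by
      rw [le_div_iff₀ (by positivity)]
      nlinarith
    rw [e, abs_mul, abs_of_pos (by linarith : (0 : ℝ) < (n : ℝ) ^ 2 / (q * q'))] at hlt
    nlinarith
  have key' : p * q' = p' * q := by linarith
  have d1 : (q : ℤ) ∣ q' := by
    have : (q : ℤ) ∣ p * q' := ⟨p', by linarith⟩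
    exact (Int.isCoprime_iff_gcd_eq_one.2 h).symm.dvd_of_dvd_mul_left this
  have d2 : (q' : ℤ) ∣ q := by
    have : (q' : ℤ) ∣ p' * q := ⟨p, by linarith⟩
    exact (Int.isCoprime_iff_gcd_eq_one.2 h').symm.dvd_of_dvd_mul_left this
  have hqq : q = q' := Nat.dvd_antisymm (Int.natCast_dvd_natCast.1 d1) (Int.natCast_dvd_natCast.1 d2)
  refine ⟨?_, hqq⟩
  subst hqq
  have : (q : ℤ) ≠ 0 := by exact_mod_cast (by omega : q ≠ 0)
  exact mul_right_cancel₀ this key'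

lemma farey_maps (z R : ℝ) (n : ℕ) :
    Set.MapsTo (fun pq : ℤ × ℕ => ⌊((pq.1 : ℝ) / pq.2 - (z - R)) * (n : ℝ) ^ 2⌋₊)
      (fareySet z R n) (Finset.range (⌊2 * R * (n : ℝ) ^ 2⌋₊ + 1) : Set ℕ) := by
  rintro ⟨p, q⟩ ⟨-, -, -, h⟩
  simp only [Finset.coe_range, Set.mem_Iio, Nat.lt_succ_iff]
  apply Nat.floor_le_floor
  have := (abs_le.1 h).2
  apply mul_le_mul_of_nonneg_right _ (by positivity)
  simp only at this
  linarith

lemma farey_inj (z R : ℝ) (n : ℕ) :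
    Set.InjOn (fun pq : ℤ × ℕ => ⌊((pq.1 : ℝ) / pq.2 - (z - R)) * (n : ℝ) ^ 2⌋₊)
      (fareySet z R n) := by
  rintro ⟨p, q⟩ ⟨h1, h2, h3, h4⟩ ⟨p', q'⟩ ⟨h1', h2', h3', h4'⟩ h
  simp only at *
  have a1 := (abs_le.1 h4).1
  have a2 := (abs_le.1 h4').1
  have b1 : 0 ≤ ((p : ℝ) / q - (z - R)) * (n : ℝ) ^ 2 := mul_nonneg (by linarith) (by positivity)
  have b2 : 0 ≤ ((p' : ℝ) / q' - (z - R)) * (n : ℝ) ^ 2 := mul_nonneg (by linarith) (by positivity)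
  have c1 := Nat.floor_le b1
  have c2 := Nat.floor_le b2
  have d1 := Nat.lt_floor_add_one (((p : ℝ) / q - (z - R)) * (n : ℝ) ^ 2)
  have d2 := Nat.lt_floor_add_one (((p' : ℝ) / q' - (z - R)) * (n : ℝ) ^ 2)
  rw [h] at c1 d1
  obtain ⟨e1, e2⟩ := farey_spacing h1 h1' h2 h2' h3 h3' (by rw [abs_lt]; constructor <;> linarith)
  rw [e1, e2]

lemma farey_finite (z R : ℝ) (n : ℕ) : (fareySet z R n).Finite :=
  Set.Finite.of_injOn (farey_maps z R n) (farey_inj z R n) (Finset.finite_toSet _)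

/-- The finite set version. -/
noncomputable def fareyF (z R : ℝ) (n : ℕ) : Finset (ℤ × ℕ) := (farey_finite z R n).toFinset

lemma mem_fareyF {z R : ℝ} {n : ℕ} {x : ℤ × ℕ} : x ∈ fareyF z R n ↔
    Int.gcd x.1 x.2 = 1 ∧ 1 ≤ x.2 ∧ x.2 ≤ n ∧ |(x.1 : ℝ) / (x.2 : ℝ) - z| ≤ R := by
  simp [fareyF, fareySet]

lemma fareyF_card (z R : ℝ) (hR : 0 < R) (n : ℕ) :
    ((fareyF z R n).card : ℝ) ≤ 2 * R * (n : ℝ) ^ 2 + 1 := by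
  have h : (fareyF z R n).card ≤ (Finset.range (⌊2 * R * (n : ℝ) ^ 2⌋₊ + 1)).card := by
    apply Finset.card_le_card_of_injOn _ _ _
    · exact (fun pq : ℤ × ℕ => ⌊((pq.1 : ℝ) / pq.2 - (z - R)) * (n : ℝ) ^ 2⌋₊)
    · simpa [fareyF] using farey_maps z R n
    · simpa [fareyF] using farey_inj z R n
  rw [Finset.card_range] at h
  have h2 : ((fareyF z R n).card : ℝ) ≤ ⌊2 * R * (n : ℝ) ^ 2⌋₊ + 1 := by exact_mod_cast h
  have := Nat.floor_le (by positivity : 0 ≤ 2 * R * (n : ℝ) ^ 2)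
  linarith

lemma farey_sum_aux (z R : ℝ) (hR : 0 < R) (n : ℕ) :
    ∑ x ∈ fareyF z R (n + 1), (1 : ℝ) / x.2 ≤
      (fareyF z R (n + 1)).card / ((n : ℝ) + 1) + 2 * R * (n + 1) + 1 - 1 / ((n : ℝ) + 1) := by
  classical
  induction n with
  | zero =>
    have : ∑ x ∈ fareyF z R (0 + 1), (1 : ℝ) / x.2 ≤ ∑ x ∈ fareyF z R (0 + 1), (1 : ℝ) := by
      apply Finset.sum_le_sum
      intro x hx
      have := (mem_fareyF.1 hx).2.1
      rw [div_le_one (by exact_mod_cast this)]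
      exact_mod_cast this
    simp only [Finset.sum_const, nsmul_eq_mul, mul_one] at this
    norm_num at this ⊢
    linarith
  | succ n ih =>
    have hsub : fareyF z R (n + 1) ⊆ fareyF z R (n + 1 + 1) := by
      intro x hx
      rw [mem_fareyF] at hx ⊢
      exact ⟨hx.1, hx.2.1, by omega, hx.2.2.2⟩
    rw [← Finset.sum_sdiff hsub]
    have e : ∑ x ∈ fareyF z R (n + 1 + 1) \ fareyF z R (n + 1), (1 : ℝ) / x.2
        = ((fareyF z R (n + 1 + 1)).card - (fareyF z R (n + 1)).card) / ((n : ℝ) + 2) := by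
      rw [← Nat.cast_sub (Finset.card_le_card hsub), ← Finset.card_sdiff_of_subset hsub,
        div_eq_mul_one_div, ← nsmul_eq_mul, ← Finset.sum_const]
      apply Finset.sum_congr rfl
      intro x hx
      rw [Finset.mem_sdiff, mem_fareyF, mem_fareyF] at hx
      obtain ⟨⟨a, b, c, d⟩, hx2⟩ := hx
      have : x.2 = n + 2 := by
        by_contra hne
        exact hx2 ⟨a, b, by omega, d⟩
      rw [this]
      push_cast
      rfl
    rw [e]
    have hc := fareyF_card z R hR (n + 1)
    push_cast at hc ⊢
    set A : ℝ := ((fareyF z R (n + 1)).card : ℝ)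
    set B : ℝ := ((fareyF z R (n + 1 + 1)).card : ℝ)
    have hn : (0 : ℝ) ≤ n := Nat.cast_nonneg n
    have k1 : A / ((n : ℝ) + 1) - A / ((n : ℝ) + 2) = A / ((n + 1) * (n + 2)) := by
      field_simp; ring
    have k2 : A / (((n : ℝ) + 1) * (n + 2)) ≤ (2 * R * ((n : ℝ) + 1) ^ 2 + 1) / ((n + 1) * (n + 2)) := by
      gcongr
    have k3 : (2 * R * ((n : ℝ) + 1) ^ 2 + 1) / ((n + 1) * (n + 2))
        = 2 * R - 2 * R / (n + 2) + (1 / ((n : ℝ) + 1) - 1 / (n + 2)) := by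
      field_simp; ring
    have k4 : 0 ≤ 2 * R / ((n : ℝ) + 2) := by positivity
    have k5 : (n : ℝ) + 1 + 1 = n + 2 := by ring
    rw [k5, sub_div]
    linarith

lemma farey_sum (z R : ℝ) (hR : 0 < R) (n : ℕ) :
    ∑ x ∈ fareyF z R n, (1 : ℝ) / x.2 ≤ 4 * R * n + 1 := by
  rcases n with _ | n
  · have : fareyF z R 0 = ∅ := by
      ext x
      rw [mem_fareyF]
      simp only [Finset.notMem_empty, iff_false]
      rintro ⟨-, a, b, -⟩
      omega
    simp [this]
  · have h1 := farey_sum_aux z R hR n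
    have hc := fareyF_card z R hR (n + 1)
    push_cast at hc ⊢
    have k2 : ((fareyF z R (n + 1)).card : ℝ) / ((n : ℝ) + 1)
        ≤ (2 * R * ((n : ℝ) + 1) ^ 2 + 1) / (n + 1) := by
      gcongr
    have k3 : (2 * R * ((n : ℝ) + 1) ^ 2 + 1) / (n + 1) = 2 * R * (n + 1) + 1 / ((n : ℝ) + 1) := by
      field_simp
    linarith

lemma farey_cover (z R : ℝ) (hR : 0 < R) (n : ℕ) (hn : 0 < n) (hnR : 1 / ((n : ℝ) + 1) ≤ R / 2) :
    R ≤ 2 / ((n : ℝ) + 1) * ∑ x ∈ fareyF z R n, (1 : ℝ) / x.2 := by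
  have hcov : Set.Icc (z - R / 2) (z + R / 2) ⊆
      ⋃ x ∈ fareyF z R n, Metric.closedBall ((x.1 : ℝ) / x.2) (1 / (((n : ℝ) + 1) * x.2)) := by
    intro y hy
    obtain ⟨r, h1, h2⟩ := Real.exists_rat_abs_sub_le_and_den_le y hn
    have hr : (r : ℝ) = (r.num : ℝ) / r.den := Rat.cast_def r
    have hd : (1 : ℝ) ≤ r.den := by exact_mod_cast r.den_pos
    simp only [Set.mem_iUnion, Metric.mem_closedBall, Real.dist_eq]
    refine ⟨(r.num, r.den), ?_, by rw [← hr]; exact h1⟩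
    rw [mem_fareyF]
    refine ⟨r.reduced, r.den_pos, h2, ?_⟩
    simp only
    rw [← hr]
    have h3 : 1 / (((n : ℝ) + 1) * r.den) ≤ 1 / ((n : ℝ) + 1) := by
      apply one_div_le_one_div_of_le (by positivity)
      nlinarith [(Nat.cast_nonneg n : (0 : ℝ) ≤ n)]
    have h4 := abs_le.1 (h1.trans (h3.trans hnR))
    rw [abs_le]
    constructor <;> linarith [hy.1, hy.2, h4.1, h4.2]
  have hv := (MeasureTheory.measure_mono (μ := MeasureTheory.volume) hcov).trans
    (MeasureTheory.measure_biUnion_finset_le _ _)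
  simp only [Real.volume_Icc, Real.volume_closedBall] at hv
  rw [← ENNReal.ofReal_sum_of_nonneg (fun i _ => by positivity),
    ENNReal.ofReal_le_ofReal_iff (Finset.sum_nonneg fun i _ => by positivity)] at hv
  rw [Finset.mul_sum]
  have e : ∀ x ∈ fareyF z R n, 2 * (1 / (((n : ℝ) + 1) * x.2)) = 2 / ((n : ℝ) + 1) * (1 / x.2) := by
    intro x _
    rw [div_mul_div_comm]; ring
  rw [Finset.sum_congr rfl e] at hv
  linarith

lemma local_main (z R Q X : ℝ) (hR : 0 < R) (hR1 : R < 1) (hQ : 0 < Q) (hX : 32 * Q ≤ X)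
    (hQR : 8 ≤ Q * R) (S : Set (ℤ × ℕ))
    (hS : S = {pq : ℤ × ℕ | Int.gcd pq.1 pq.2 = 1 ∧ Q ^ 2 < (pq.2 : ℝ) ^ 2 ∧
      (pq.2 : ℝ) ^ 2 ≤ X ^ 2 ∧ |(pq.1 : ℝ) / (pq.2 : ℝ) - z| ≤ R}) :
    R * Q ^ 2 / 4 ≤ (S.ncard : ℝ) ∧ (S.ncard : ℝ) ≤ 2 * R * X ^ 2 + 1 := by
  classical
  have hX0 : 0 < X := by linarith
  set n := ⌊X⌋₊ with hn
  set m := ⌊Q⌋₊ with hm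
  have hnX : (n : ℝ) ≤ X := Nat.floor_le hX0.le
  have hmQ : (m : ℝ) ≤ Q := Nat.floor_le hQ.le
  have hXn : X < n + 1 := Nat.lt_floor_add_one X
  have hmem : ∀ x : ℤ × ℕ, x ∈ S ↔ x ∈ fareyF z R n \ fareyF z R m := by
    intro x
    rw [hS, Finset.mem_sdiff, mem_fareyF, mem_fareyF, Set.mem_ofPred_eq,
      sq_lt_sq₀ hQ.le (Nat.cast_nonneg _), sq_le_sq₀ (Nat.cast_nonneg _) hX0.le,
      hn, hm, Nat.le_floor_iff hX0.le, Nat.le_floor_iff hQ.le]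
    constructor
    · rintro ⟨a, b, c, d⟩
      have : (0 : ℝ) < x.2 := hQ.trans b
      exact ⟨⟨a, by exact_mod_cast this, c, d⟩, fun h => absurd h.2.2.1 (not_le.2 b)⟩
    · rintro ⟨⟨a, b, c, d⟩, e⟩
      refine ⟨a, ?_, c, d⟩
      by_contra hle
      exact e ⟨a, b, not_lt.1 hle, d⟩
  have hSe : S = ((fareyF z R n \ fareyF z R m : Finset (ℤ × ℕ)) : Set (ℤ × ℕ)) := by
    ext x; rw [hmem, Finset.mem_coe]
  have hcard : S.ncard = (fareyF z R n \ fareyF z R m).card := by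
    rw [hSe, Set.ncard_coe_finset]
  have hQ8 : 8 ≤ Q := by nlinarith
  have hmn : m ≤ n := Nat.floor_le_floor (by linarith)
  have hsub : fareyF z R m ⊆ fareyF z R n := by
    intro x hx
    rw [mem_fareyF] at hx ⊢
    exact ⟨hx.1, hx.2.1, by omega, hx.2.2.2⟩
  constructor
  · have hn0 : 0 < n := Nat.floor_pos.2 (by linarith)
    have hcov := farey_cover z R hR n hn0 (by
      rw [div_le_iff₀ (by positivity)]
      nlinarith)
    rw [← Finset.sum_sdiff hsub] at hcov
    have h1 := farey_sum z R hR m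
    have h2 : ∑ x ∈ fareyF z R n \ fareyF z R m, (1 : ℝ) / x.2 ≤ S.ncard * (1 / Q) := by
      rw [hcard, ← nsmul_eq_mul]
      apply Finset.sum_le_card_nsmul
      intro x hx
      have := (hmem x).2 hx
      rw [hS] at this
      have := this.2.1
      rw [sq_lt_sq₀ hQ.le (Nat.cast_nonneg _)] at this
      exact one_div_le_one_div_of_le hQ this.le
    rw [div_mul_eq_mul_div, le_div_iff₀ (by positivity)] at hcov
    have h3 : R * X ≤ R * (n + 1) := by gcongr
    have h4 : R * m ≤ R * Q := by gcongr
    have h6 : R * (32 * Q) ≤ R * X := by gcongr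
    have h5 : R * Q ≤ (S.ncard : ℝ) * (1 / Q) := by nlinarith
    rw [mul_one_div, le_div_iff₀ hQ] at h5
    nlinarith [mul_pos hR (pow_pos hQ 2)]
  · rw [hcard]
    have h1 : ((fareyF z R n \ fareyF z R m).card : ℝ) ≤ (fareyF z R n).card := by
      exact_mod_cast Finset.card_le_card Finset.sdiff_subset
    have h2 := fareyF_card z R hR n
    have h3 : 2 * R * (n : ℝ) ^ 2 ≤ 2 * R * X ^ 2 := by gcongr
    linarith

/-- For all sufficiently small `τ ∈ (0,1)` there exists `C ∈ (0,1)` such that for all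
sufficiently small `R > 0`, all `z ∈ ℝ` and all `k ∈ ℕ` with `τ^k < C·R²`, the count
`N(z,R,k,τ)` is comparable to `τ⁻ᵏ·R`, with comparability constants depending only on `τ`. -/
theorem localCountingRationals :
    ∃ τ₀ ∈ Set.Ioo (0 : ℝ) 1, ∀ τ ∈ Set.Ioo (0 : ℝ) τ₀,
      ∃ C ∈ Set.Ioo (0 : ℝ) 1, ∃ a b R₀ : ℝ, 0 < a ∧ a ≤ b ∧ 0 < R₀ ∧
        ∀ R ∈ Set.Ioo (0 : ℝ) R₀, ∀ z : ℝ, ∀ k : ℕ, τ ^ k < C * R ^ 2 →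
          a * (τ ^ k)⁻¹ * R ≤ (ratCount z R τ k : ℝ) ∧
          (ratCount z R τ k : ℝ) ≤ b * (τ ^ k)⁻¹ * R := by
  refine ⟨1 / 1024, by norm_num, ?_⟩
  rintro τ ⟨hτ0, hτ1⟩
  have hb : 1024 ≤ τ⁻¹ := by
    rw [le_inv_comm₀ (by norm_num) hτ0]; norm_num at hτ1 ⊢; exact hτ1.le
  refine ⟨1 / 64, by norm_num, 1 / 4, 3 * τ⁻¹, 1, by norm_num, by linarith, by norm_num, ?_⟩
  rintro R ⟨hR0, hR1⟩ z k hk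
  set T := (τ ^ k)⁻¹ with hT
  have hτk : 0 < τ ^ k := pow_pos hτ0 k
  have hT0 : 0 < T := inv_pos.2 hτk
  have hTR : 64 ≤ T * R ^ 2 := by
    rw [hT, inv_mul_eq_div, le_div_iff₀ hτk]; linarith
  have hT1 : (τ ^ (k + 1))⁻¹ = T * τ⁻¹ := by rw [pow_succ, mul_inv]
  have hQ2 : √T ^ 2 = T := Real.sq_sqrt hT0.le
  have hX2 : √(T * τ⁻¹) ^ 2 = T * τ⁻¹ := Real.sq_sqrt (by positivity)
  have hmain := local_main z R (√T) (√(T * τ⁻¹)) hR0 hR1 (Real.sqrt_pos.2 hT0)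
    (by
      apply Real.le_sqrt_of_sq_le
      rw [mul_pow, hQ2]
      nlinarith)
    (by
      refine (sq_le_sq₀ (by norm_num) (by positivity)).1 ?_
      rw [mul_pow, hQ2]; linarith)
    _ rfl
  rw [hQ2, hX2, ← hT1] at hmain
  change R * T / 4 ≤ (ratCount z R τ k : ℝ) ∧ (ratCount z R τ k : ℝ) ≤ _ at hmain
  rw [hT1] at hmain
  refine ⟨by linarith [hmain.1], hmain.2.trans ?_⟩
  have h1 : 1 ≤ T * R := by nlinarith [mul_pos hT0 hR0]
  nlinarith
end

section
/- For all sufficiently small τ ∈ (0,1) there exist constants c₁ > 1 and c₂ ∈ (0,1) such that for all sufficiently small R > 0, all k ∈ ℕ with R² < τ^k < R, and all z ∈ ℝ for which there exist coprime p₀ ∈ ℤ and q₀ ∈ ℕ with c₁·τ^{k/2} ≤ |z − p₀/q₀| ≤ c₂·q₀^{-1}·√R, one has N(z,R,k,τ) ≈ τ^{-k}·R, where the implicit constants in ≈ depend only on τ. More precisely: there exists τ₀ ∈ (0,1) such that for every τ ∈ (0,τ₀) there exist c₁ > 1, c₂ ∈ (0,1), constants 0 < a ≤ b and R₀ > 0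 such that for all R ∈ (0,R₀), all k ∈ ℕ with R² < τ^k < R, and all z ∈ ℝ admitting coprime p₀ ∈ ℤ, q₀ ∈ ℕ with c₁·τ^{k/2} ≤ |z − p₀/q₀| ≤ c₂·q₀^{-1}·√R, one has a·τ^{-k}·R ≤ N(z,R,k,τ) ≤ b·τ^{-k}·R. -/
theorem icr_sqle {a b : ℝ} (h : a ^ 2 ≤ b ^ 2) (hb : 0 ≤ b) : a ≤ b :=
  (abs_le.1 (abs_le_of_sq_le_sq h hb)).2

theorem icr_sep (r s : ℚ) (h : r ≠ s) : 1 / ((r.den : ℝ) * s.den) ≤ |(r : ℝ) - s| := by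
  have hr : (0 : ℝ) < r.den := by exact_mod_cast r.pos
  have hs : (0 : ℝ) < s.den := by exact_mod_cast s.pos
  have e1 : (r : ℝ) = r.num / r.den := by exact_mod_cast (Rat.num_div_den r).symm
  have e2 : (s : ℝ) = s.num / s.den := by exact_mod_cast (Rat.num_div_den s).symm
  have e : (r : ℝ) - s = ((r.num * s.den - r.den * s.num : ℤ) : ℝ) / (r.den * s.den) := by
    rw [e1, e2, div_sub_div _ _ hr.ne' hs.ne']
    push_cast
    rfl
  have hne : (r.num * s.den - r.den * s.num : ℤ) ≠ 0 := by
    intro h0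
    apply h
    have : (r : ℝ) - s = 0 := by rw [e, h0]; simp
    exact_mod_cast sub_eq_zero.mp this
  rw [e, abs_div, abs_of_pos (mul_pos hr hs)]
  have : (1 : ℝ) ≤ |((r.num * s.den - r.den * s.num : ℤ) : ℝ)| := by
    exact_mod_cast Int.one_le_abs hne
  gcongr

theorem icr_sum (S : Finset ℚ) (E u v w : ℝ) (hE : 0 < E) (huv : u ≤ v + w)
    (hden : ∀ r ∈ S, (r.den : ℝ) ≤ E) (hu : ∀ r ∈ S, u ≤ (r : ℝ)) (hv : ∀ r ∈ S, (r : ℝ) ≤ v)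
    (hw : ∀ r ∈ S, 1 / ((r.den : ℝ) * E) ≤ w) :
    ∑ r ∈ S, 1 / ((r.den : ℝ) * E) ≤ v + w - u := by
  have hpos : ∀ r : ℚ, 0 ≤ 1 / ((r.den : ℝ) * E) := fun r => by positivity
  have hlt : ∀ r ∈ S, ∀ s ∈ S, (r : ℝ) < s → (r : ℝ) + 1 / ((r.den : ℝ) * E) ≤ s := by
    intro r hr s hs hrs
    have h1 := icr_sep s r (by rintro rfl; exact lt_irrefl _ hrs)
    rw [abs_of_pos (by linarith)] at h1
    have hr0 : (0 : ℝ) < r.den := by exact_mod_cast r.pos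
    have hs0 : (0 : ℝ) < s.den := by exact_mod_cast s.pos
    have h2 : 1 / ((r.den : ℝ) * E) ≤ 1 / ((s.den : ℝ) * r.den) := by
      rw [mul_comm (s.den : ℝ)]
      have := hden s hs
      gcongr
    linarith
  have hd : (S : Set ℚ).PairwiseDisjoint
      (fun r : ℚ => Set.Ico (r : ℝ) (r + 1 / ((r.den : ℝ) * E))) := by
    intro r hr s hs hrs
    rw [Function.onFun, Set.disjoint_left]
    intro x hx hy
    rcases lt_or_gt_of_ne (show (r : ℝ) ≠ s by exact_mod_cast hrs) with h | h
    · have := hlt r hr s hs h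
      linarith [hx.2, hy.1]
    · have := hlt s hs r hr h
      linarith [hx.1, hy.2]
  have hm := MeasureTheory.measure_biUnion_finset (μ := MeasureTheory.volume) hd
    (fun _ _ => measurableSet_Ico)
  have hsub : (⋃ r ∈ S, Set.Ico (r : ℝ) (r + 1 / ((r.den : ℝ) * E))) ⊆ Set.Icc u (v + w) := by
    intro x hx
    simp only [Set.mem_iUnion] at hx
    obtain ⟨r, hr, hx⟩ := hx
    exact ⟨(hu r hr).trans hx.1, by linarith [hx.2, hv r hr, hw r hr]⟩
  have hle := MeasureTheory.measure_mono (μ := MeasureTheory.volume) hsub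
  rw [hm] at hle
  simp only [Real.volume_Ico, Real.volume_Icc, add_sub_cancel_left] at hle
  rw [← ENNReal.ofReal_sum_of_nonneg (fun r _ => hpos r)] at hle
  exact (ENNReal.ofReal_le_ofReal_iff (by linarith)).mp hle

theorem icr_cover (S : Finset ℚ) (f : ℚ → ℝ) (hf : ∀ r, 0 ≤ f r) (u v : ℝ)
    (h : ∀ x ∈ Set.Icc u v, ∃ r ∈ S, |x - r| ≤ f r) : v - u ≤ ∑ r ∈ S, 2 * f r := by
  have hsub : Set.Icc u v ⊆ ⋃ r ∈ S, Set.Icc ((r : ℝ) - f r) (r + f r) := by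
    intro x hx
    obtain ⟨r, hr, hx⟩ := h x hx
    simp only [Set.mem_iUnion]
    rw [abs_le] at hx
    exact ⟨r, hr, by linarith [hx.1], by linarith [hx.2]⟩
  have hle := (MeasureTheory.measure_mono (μ := MeasureTheory.volume) hsub).trans
    (MeasureTheory.measure_biUnion_finset_le _ _)
  simp only [Real.volume_Icc] at hle
  have e : ∀ r : ℚ, (r : ℝ) + f r - (r - f r) = 2 * f r := fun r => by ring
  simp only [e] at hle
  rw [← ENNReal.ofReal_sum_of_nonneg (fun r _ => by have := hf r; positivity)] at hle
  exact (ENNReal.ofReal_le_ofReal_iff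
    (Finset.sum_nonneg fun r _ => by have := hf r; positivity)).mp hle

theorem icr_finite (z R D : ℝ) : {r : ℚ | (r.den : ℝ) ≤ D ∧ |(r : ℝ) - z| ≤ R}.Finite := by
  obtain ⟨B, hB⟩ := exists_nat_gt ((|z| + R) * D)
  obtain ⟨n, hn⟩ := exists_nat_gt D
  have hfin : ((Set.Icc (-(B : ℤ)) B) ×ˢ (Set.Iic n)).Finite :=
    (Set.finite_Icc _ _).prod (Set.finite_Iic _)
  refine (hfin.image (fun pq : ℤ × ℕ => (pq.1 : ℚ) / pq.2)).subset ?_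
  rintro r ⟨h1, h2⟩
  refine ⟨(r.num, r.den), ⟨?_, ?_⟩, Rat.num_div_den r⟩
  · have hr : (0 : ℝ) < r.den := by exact_mod_cast r.pos
    have e1 : (r : ℝ) = r.num / r.den := by exact_mod_cast (Rat.num_div_den r).symm
    have e3 : (r.num : ℝ) = r * r.den := by rw [e1]; field_simp
    have h3 : |(r : ℝ)| ≤ |z| + R := by
      have := abs_add_le ((r : ℝ) - z) z
      rw [sub_add_cancel] at this
      linarith
    have h4 : |(r.num : ℝ)| ≤ B := by
      rw [e3, abs_mul, abs_of_pos hr]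
      have : |(r : ℝ)| * r.den ≤ (|z| + R) * D := by
        have := abs_nonneg (r : ℝ)
        gcongr
        linarith
      linarith
    rw [abs_le] at h4
    exact ⟨by exact_mod_cast h4.1, by exact_mod_cast h4.2⟩
  · have : (r.den : ℝ) < n := lt_of_le_of_lt h1 hn
    exact le_of_lt (by exact_mod_cast this)

theorem icr_count (z R τ Q D : ℝ) (k : ℕ) (hQ : 0 < Q) (hD : 0 < D) (hQ2 : Q ^ 2 = (τ ^ k)⁻¹)
    (hD2 : D ^ 2 = (τ ^ (k + 1))⁻¹) :
    ratCount z R τ k = {r : ℚ | Q < r.den ∧ (r.den : ℝ) ≤ D ∧ |(r : ℝ) - z| ≤ R}.ncard := by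
  unfold ratCount
  rw [← hQ2, ← hD2]
  have hinj : Function.Injective (fun r : ℚ => (r.num, r.den)) := by
    intro r s h
    simp only [Prod.mk.injEq] at h
    exact Rat.ext h.1 h.2
  rw [← Set.ncard_image_of_injective _ hinj]
  congr 1
  ext ⟨p, q⟩
  simp only [Set.mem_ofPred_eq, Set.mem_image, Prod.mk.injEq]
  constructor
  · rintro ⟨h1, h2, h3, h4⟩
    have h2' : Q < q := lt_of_pow_lt_pow_left₀ 2 (by positivity) h2
    have h3' : (q : ℝ) ≤ D := icr_sqle h3 hD.le
    have hq : q ≠ 0 := by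
      rintro rfl
      simp at h2'
      linarith
    refine ⟨⟨p, q, hq, h1⟩, ⟨h2', h3', ?_⟩, rfl, rfl⟩
    rw [Rat.cast_def]
    exact h4
  · rintro ⟨r, ⟨h2, h3, h4⟩, rfl, rfl⟩
    refine ⟨r.reduced, by gcongr, by gcongr, ?_⟩
    rw [Rat.cast_def] at h4
    exact h4

set_option maxHeartbeats 1000000 in
/-- For all sufficiently small `τ ∈ (0,1)` there exist `c₁ > 1` and `c₂ ∈ (0,1)` such that
for all sufficiently small `R > 0`, all `k` with `R² < τ^k < R`, and all `z ∈ ℝ` admitting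
coprime `p₀ ∈ ℤ`, `q₀ ∈ ℕ` with `c₁·τ^{k/2} ≤ |z − p₀/q₀| ≤ c₂·q₀⁻¹·√R`, the count
`N(z,R,k,τ)` is comparable to `τ⁻ᵏ·R`, with constants depending only on `τ`. -/
theorem intermediateCountingRationals :
    ∃ τ₀ ∈ Set.Ioo (0 : ℝ) 1, ∀ τ ∈ Set.Ioo (0 : ℝ) τ₀,
      ∃ c₁ > (1 : ℝ), ∃ c₂ ∈ Set.Ioo (0 : ℝ) 1, ∃ a b R₀ : ℝ, 0 < a ∧ a ≤ b ∧ 0 < R₀ ∧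
        ∀ R ∈ Set.Ioo (0 : ℝ) R₀, ∀ k : ℕ, R ^ 2 < τ ^ k → τ ^ k < R →
          ∀ z : ℝ,
            (∃ p₀ : ℤ, ∃ q₀ : ℕ, 0 < q₀ ∧ Int.gcd p₀ q₀ = 1 ∧
              c₁ * τ ^ ((k : ℝ) / 2) ≤ |z - (p₀ : ℝ) / (q₀ : ℝ)| ∧
              |z - (p₀ : ℝ) / (q₀ : ℝ)| ≤ c₂ * ((q₀ : ℝ))⁻¹ * Real.sqrt R) →
            a * (τ ^ k)⁻¹ * R ≤ (ratCount z R τ k : ℝ) ∧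
            (ratCount z R τ k : ℝ) ≤ b * (τ ^ k)⁻¹ * R := by
  refine ⟨1 / 400, by norm_num, fun τ hτ => ⟨4, by norm_num, 1 / 2, by norm_num, 1 / 4, 3 / τ, 1,
    by norm_num, ?_, by norm_num, ?_⟩⟩
  · rw [le_div_iff₀ hτ.1]; linarith [hτ.2]
  obtain ⟨hτ0, hτ1⟩ := hτ
  rintro R ⟨hR0, hR1⟩ k hk1 hk2 z ⟨p₀, q₀, hq₀, hcop, hz1, hz2⟩
  have ht : 0 < τ ^ k := by positivity
  set s : ℝ := Real.sqrt (τ ^ k) with hs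
  have hs0 : 0 < s := Real.sqrt_pos.mpr ht
  have hs2 : s ^ 2 = τ ^ k := Real.sq_sqrt ht.le
  have hsr : τ ^ ((k : ℝ) / 2) = s := by
    rw [hs, Real.sqrt_eq_rpow, ← Real.rpow_natCast, ← Real.rpow_mul hτ0.le]
    congr 1
    ring
  rw [hsr] at hz1
  set t : ℝ := Real.sqrt τ with htd
  have ht0 : 0 < t := Real.sqrt_pos.mpr hτ0
  have ht2 : t ^ 2 = τ := Real.sq_sqrt hτ0.le
  have ht20 : t ≤ 1 / 20 := by
    apply icr_sqle _ (by norm_num)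
    rw [ht2]; linarith
  have hRs : R ≤ s := by
    apply icr_sqle _ hs0.le
    rw [hs2]; exact hk1.le
  have hsR : s ≤ Real.sqrt R := Real.sqrt_le_sqrt hk2.le
  have hRR : Real.sqrt R * Real.sqrt R = R := Real.mul_self_sqrt hR0.le
  -- Q = 1/s, D = 1/(s t)
  rw [icr_count z R τ s⁻¹ (s * t)⁻¹ k (by positivity) (by positivity)
    (by rw [inv_pow, hs2]) (by rw [inv_pow, mul_pow, hs2, ht2, pow_succ])]
  rw [← hs2] at hk2 ⊢
  have hfin := icr_finite z R (s * t)⁻¹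
  have hGfin : {r : ℚ | s⁻¹ < r.den ∧ (r.den : ℝ) ≤ (s * t)⁻¹ ∧ |(r : ℝ) - z| ≤ R}.Finite :=
    hfin.subset (fun r hr => hr.2)
  set G := hGfin.toFinset with hG
  have hGm : ∀ r : ℚ, r ∈ G ↔ (s⁻¹ < r.den ∧ (r.den : ℝ) ≤ (s * t)⁻¹ ∧ |(r : ℝ) - z| ≤ R) := by
    intro r; simp [hG]
  rw [Set.ncard_eq_toFinset_card _ hGfin, ← hG]
  have hdp : ∀ r : ℚ, (0 : ℝ) < r.den := fun r => by exact_mod_cast r.pos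
  have hinv : ∀ (r : ℚ) (x : ℝ), 1 / ((r.den : ℝ) * x⁻¹) = (r.den : ℝ)⁻¹ * x := by
    intro r x
    rw [one_div, mul_inv, inv_inv]
  constructor
  · -- lower bound
    have hBfin : {r : ℚ | (r.den : ℝ) ≤ s⁻¹ ∧ |(r : ℝ) - z| ≤ 2 * R ∧
        (r.den : ℝ)⁻¹ * s ≤ R}.Finite :=
      (icr_finite z (2 * R) s⁻¹).subset (fun r hr => ⟨hr.1, hr.2.1⟩)
    set B := hBfin.toFinset with hB
    have hBm : ∀ r : ℚ, r ∈ B ↔ ((r.den : ℝ) ≤ s⁻¹ ∧ |(r : ℝ) - z| ≤ 2 * R ∧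
        (r.den : ℝ)⁻¹ * s ≤ R) := by
      intro r; simp [hB]
    have hBsum : ∑ r ∈ B, (r.den : ℝ)⁻¹ * s ≤ 5 * R := by
      have := icr_sum B s⁻¹ (z - 2 * R) (z + 2 * R) R (by positivity) (by linarith)
        (fun r hr => ((hBm r).1 hr).1)
        (fun r hr => by have := (abs_le.1 ((hBm r).1 hr).2.1).1; linarith)
        (fun r hr => by have := (abs_le.1 ((hBm r).1 hr).2.1).2; linarith)
        (fun r hr => by rw [hinv]; exact ((hBm r).1 hr).2.2)
      simp only [hinv] at this
      linarith
    have hdisj : Disjoint B G := by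
      rw [Finset.disjoint_left]
      intro r h1 h2
      have := ((hBm r).1 h1).1
      have := ((hGm r).1 h2).1
      linarith
    have hcov : ∀ x ∈ Set.Icc (z - R / 2) (z + R / 2), ∃ r ∈ B ∪ G,
        |x - r| ≤ (r.den : ℝ)⁻¹ * (s * t) := by
      intro x hx
      have hD1 : 1 ≤ (s * t)⁻¹ := by
        rw [one_le_inv₀ (by positivity)]
        have : Real.sqrt R ≤ 1 := by
          rw [Real.sqrt_le_one]; exact hR1.le
        nlinarith
      have hn : 0 < ⌊(s * t)⁻¹⌋₊ := Nat.floor_pos.2 hD1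
      obtain ⟨r, hr1, hr2⟩ := Real.exists_rat_abs_sub_le_and_den_le x hn
      have hrD : (r.den : ℝ) ≤ (s * t)⁻¹ := (Nat.le_floor_iff (by positivity)).1 hr2
      have hxr : |x - r| ≤ (r.den : ℝ)⁻¹ * (s * t) := by
        refine hr1.trans ?_
        rw [← hinv, mul_comm (r.den : ℝ)]
        have := Nat.lt_floor_add_one (s * t)⁻¹
        have := hdp r
        gcongr
      refine ⟨r, ?_, hxr⟩
      have hxz : |x - z| ≤ R / 2 := by
        rw [abs_le]; constructor <;> linarith [hx.1, hx.2]
      have hrz : |(r : ℝ) - z| ≤ R / 2 + (r.den : ℝ)⁻¹ * (s * t) := by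
        have := abs_sub_le (r : ℝ) x z
        rw [abs_sub_comm (r : ℝ) x] at this
        linarith
      have hstep : (r.den : ℝ)⁻¹ * s ≤ R → (r.den : ℝ)⁻¹ * (s * t) ≤ R / 20 := by
        intro h
        have : (r.den : ℝ)⁻¹ * s * t ≤ R * (1 / 20) := by gcongr
        linarith
      rw [Finset.mem_union]
      rcases le_or_gt (r.den : ℝ) s⁻¹ with hle | hgt
      · left
        have key : (r.den : ℝ)⁻¹ * s ≤ R := by
          have hd1 : (r.den : ℝ)⁻¹ ≤ 1 := inv_le_one_of_one_le₀ (by exact_mod_cast r.pos)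
          have h20 : (r.den : ℝ)⁻¹ * (s * t) ≤ s / 20 := by
            have : (r.den : ℝ)⁻¹ * (s * t) ≤ 1 * (s * (1 / 20)) := by gcongr
            linarith
          set r₀ : ℚ := ⟨p₀, q₀, hq₀.ne', hcop⟩ with hr₀
          have hr₀c : (r₀ : ℝ) = (p₀ : ℝ) / q₀ := Rat.cast_def r₀
          rw [← hr₀c] at hz1 hz2
          have hne : r ≠ r₀ := by
            intro h
            rw [← h, abs_sub_comm] at hz1
            linarith
          have hsep := icr_sep r r₀ hne
          have htri := abs_sub_le (r : ℝ) z r₀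
          have hb : 1 / ((r.den : ℝ) * r₀.den) ≤ 2 * |z - r₀| := by linarith
          have hq : (0 : ℝ) < q₀ := by exact_mod_cast hq₀
          have hden : (r₀.den : ℝ) = q₀ := rfl
          rw [hden, one_div, mul_inv] at hb
          have hb2 : (r.den : ℝ)⁻¹ * (q₀ : ℝ)⁻¹ ≤ Real.sqrt R * (q₀ : ℝ)⁻¹ := by linarith
          have hb3 := le_of_mul_le_mul_right hb2 (by positivity)
          calc (r.den : ℝ)⁻¹ * s ≤ Real.sqrt R * Real.sqrt R := by gcongr
            _ = R := hRR
        rw [hBm]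
        have := hstep key
        exact ⟨hle, by linarith, key⟩
      · right
        rw [hGm]
        have h1 : (r.den : ℝ)⁻¹ ≤ s := inv_le_of_inv_le₀ hs0 hgt.le
        have : (r.den : ℝ)⁻¹ * s ≤ R := by nlinarith
        have := hstep this
        exact ⟨hgt, hrD, by linarith⟩
    have hfinal := icr_cover (B ∪ G) (fun r => (r.den : ℝ)⁻¹ * (s * t))
      (fun r => by positivity) _ _ hcov
    rw [Finset.sum_union hdisj] at hfinal
    have hB2 : ∑ r ∈ B, 2 * ((r.den : ℝ)⁻¹ * (s * t)) ≤ R / 2 := by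
      have e : ∑ r ∈ B, 2 * ((r.den : ℝ)⁻¹ * (s * t)) = (∑ r ∈ B, (r.den : ℝ)⁻¹ * s) * (2 * t) := by
        rw [Finset.sum_mul]
        exact Finset.sum_congr rfl fun r _ => by ring
      rw [e]
      have : (∑ r ∈ B, (r.den : ℝ)⁻¹ * s) * (2 * t) ≤ (5 * R) * (2 * (1 / 20)) := by gcongr
      linarith
    have hG2 : ∑ r ∈ G, 2 * ((r.den : ℝ)⁻¹ * (s * t)) ≤ G.card * (2 * s ^ 2) := by
      rw [← nsmul_eq_mul]
      apply Finset.sum_le_card_nsmul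
      intro r hr
      have h1 : (r.den : ℝ)⁻¹ ≤ s := inv_le_of_inv_le₀ hs0 ((hGm r).1 hr).1.le
      have : (r.den : ℝ)⁻¹ * (s * t) ≤ s * (s * 1) := by
        gcongr
        linarith
      nlinarith
    have : R ≤ G.card * (4 * s ^ 2) := by linarith
    have hs4 : 0 < s ^ 2 := by positivity
    calc 1 / 4 * (s ^ 2)⁻¹ * R ≤ 1 / 4 * (s ^ 2)⁻¹ * (G.card * (4 * s ^ 2)) := by gcongr
      _ = G.card * ((s ^ 2)⁻¹ * s ^ 2) := by ring
      _ = G.card := by rw [inv_mul_cancel₀ hs4.ne', mul_one]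
  · have hsum := icr_sum G (s * t)⁻¹ (z - R) (z + R) R (by positivity) (by linarith)
      (fun r hr => ((hGm r).1 hr).2.1)
      (fun r hr => by have := (abs_le.1 ((hGm r).1 hr).2.2).1; linarith)
      (fun r hr => by have := (abs_le.1 ((hGm r).1 hr).2.2).2; linarith)
      (fun r hr => by
        rw [hinv]
        have h1 : (r.den : ℝ)⁻¹ ≤ s := inv_le_of_inv_le₀ hs0 ((hGm r).1 hr).1.le
        have : (r.den : ℝ)⁻¹ * (s * t) ≤ s * (s * 1) := by
          gcongr
          linarith
        nlinarith)
    simp only [hinv] at hsum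
    have hlow : G.card * (s ^ 2 * τ) ≤ ∑ r ∈ G, (r.den : ℝ)⁻¹ * (s * t) := by
      rw [← nsmul_eq_mul]
      apply Finset.card_nsmul_le_sum
      intro r hr
      have h1 : s * t ≤ (r.den : ℝ)⁻¹ := by
        rw [le_inv_comm₀ (by positivity) (hdp r)]
        exact ((hGm r).1 hr).2.1
      calc s ^ 2 * τ = (s * t) * (s * t) := by rw [← ht2]; ring
        _ ≤ _ := by gcongr
    have h3 : G.card * (s ^ 2 * τ) ≤ 3 * R := by linarith
    have e : 3 / τ * (s ^ 2)⁻¹ * R = 3 * R / (s ^ 2 * τ) := by field_simp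
    rw [e, le_div_iff₀ (by positivity)]
    exact h3
end

section
/- Let λ ∈ (1,2], c ≥ 1, z ∈ ℝ, and R > 0. If there exist coprime p₀ ∈ ℤ and q₀ ∈ ℕ such that c·R^λ/q₀² ≥ c²·R^{2λ} + (|z − p₀/q₀| + R)², then the set {(p,q) ∈ ℤ × ℕ : gcd(p,q) = 1, |p/q − z| ≤ R, c·R^λ ≤ 1/q²} has at most one element. -/
theorem prox_cop {p p0 : ℤ} {q q0 : ℕ} (hq0 : 0 < q0)
    (hg : Int.gcd p q = 1) (hg0 : Int.gcd p0 q0 = 1) (h : p * q0 = p0 * q) :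
    p = p0 ∧ q = q0 := by
  have h1 : (q : ℤ) ∣ q0 := by
    have : (q : ℤ) ∣ p * q0 := ⟨p0, by rw [h]; ring⟩
    exact (Int.isCoprime_iff_gcd_eq_one.mpr hg).symm.dvd_of_dvd_mul_left this
  have h2 : (q0 : ℤ) ∣ q := by
    have : (q0 : ℤ) ∣ p0 * q := ⟨p, by rw [← h]; ring⟩
    exact (Int.isCoprime_iff_gcd_eq_one.mpr hg0).symm.dvd_of_dvd_mul_left this
  have h3 : q = q0 := Nat.dvd_antisymm (by exact_mod_cast h1) (by exact_mod_cast h2)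
  subst h3
  refine ⟨?_, rfl⟩
  have : (q : ℤ) ≠ 0 := by exact_mod_cast hq0.ne'
  exact mul_right_cancel₀ this h

theorem prox_key {p p0 : ℤ} {q q0 : ℕ} {Y z R : ℝ} (hY : 0 < Y) (hq0 : 0 < q0)
    (hg : Int.gcd p q = 1) (hg0 : Int.gcd p0 q0 = 1)
    (h : Y / (q0 : ℝ) ^ 2 ≥ Y ^ 2 + (|z - (p0 : ℝ) / (q0 : ℝ)| + R) ^ 2)
    (hd : |(p : ℝ) / (q : ℝ) - z| ≤ R) (hy : Y ≤ 1 / (q : ℝ) ^ 2) :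
    p = p0 ∧ q = q0 := by
  refine prox_cop hq0 hg hg0 ?_
  by_contra hne
  have hq : 0 < q := by
    rcases Nat.eq_zero_or_pos q with h0 | h0
    · subst h0
      norm_num at hy
      linarith
    · exact h0
  have hqr : (0 : ℝ) < q := by exact_mod_cast hq
  have hqr0 : (0 : ℝ) < q0 := by exact_mod_cast hq0
  have h1 : (1 : ℝ) ≤ |(p : ℝ) * q0 - p0 * q| := by
    have : (1 : ℤ) ≤ |p * q0 - p0 * q| := Int.one_le_abs (sub_ne_zero.mpr hne)
    exact_mod_cast this
  have h2 : |(p : ℝ) / q - p0 / q0| ≤ |z - (p0 : ℝ) / (q0 : ℝ)| + R := by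
    have := abs_sub_le ((p : ℝ) / q) z ((p0 : ℝ) / q0)
    linarith
  have h3 : (p : ℝ) / q - p0 / q0 = (p * q0 - p0 * q) / (q * q0) := by
    field_simp
  rw [h3, abs_div, abs_of_pos (mul_pos hqr hqr0)] at h2
  have h4 : 1 / ((q : ℝ) * q0) ≤ |z - (p0 : ℝ) / (q0 : ℝ)| + R :=
    le_trans (by gcongr) h2
  have h5 : (1 / ((q : ℝ) * q0)) ^ 2 ≤ (|z - (p0 : ℝ) / (q0 : ℝ)| + R) ^ 2 := by
    gcongr
  have h6 : Y / (q0 : ℝ) ^ 2 ≤ 1 / (q : ℝ) ^ 2 / (q0 : ℝ) ^ 2 := by gcongr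
  have h7 : (1 / ((q : ℝ) * q0)) ^ 2 = 1 / (q : ℝ) ^ 2 / (q0 : ℝ) ^ 2 := by
    field_simp
  have h8 : 0 < Y ^ 2 := by positivity
  linarith

/-- Proximity theorem for the modular group: if `λ ∈ (1,2]`, `c ≥ 1`, `z ∈ ℝ`, `R > 0`
and there exist coprime `p₀ ∈ ℤ`, `q₀ ∈ ℕ` with
`c·R^λ/q₀² ≥ c²·R^{2λ} + (|z − p₀/q₀| + R)²`, then there is at most one reduced pair
`(p,q)` with `|p/q − z| ≤ R` and `c·R^λ ≤ 1/q²`. -/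
theorem proximityRationals (lam c z R : ℝ)
    (hlam : lam ∈ Set.Ioc (1 : ℝ) 2) (hc : 1 ≤ c) (hR : 0 < R)
    (h : ∃ p₀ : ℤ, ∃ q₀ : ℕ, 0 < q₀ ∧ Int.gcd p₀ q₀ = 1 ∧
      c * R ^ lam / (q₀ : ℝ) ^ 2 ≥
        c ^ 2 * R ^ (2 * lam) + (|z - (p₀ : ℝ) / (q₀ : ℝ)| + R) ^ 2) :
    {pq : ℤ × ℕ | Int.gcd pq.1 pq.2 = 1 ∧
      |(pq.1 : ℝ) / (pq.2 : ℝ) - z| ≤ R ∧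
      c * R ^ lam ≤ 1 / (pq.2 : ℝ) ^ 2}.Subsingleton := by
  obtain ⟨p0, q0, hq0, hg0, h⟩ := h
  have hY : 0 < c * R ^ lam := mul_pos (by linarith) (Real.rpow_pos_of_pos hR _)
  have e : c ^ 2 * R ^ (2 * lam) = (c * R ^ lam) ^ 2 := by
    rw [mul_pow, two_mul, Real.rpow_add hR, sq (R ^ lam)]
  rw [e] at h
  rintro ⟨p, q⟩ ⟨hg, hd, hy⟩ ⟨p', q'⟩ ⟨hg', hd', hy'⟩
  obtain ⟨a, b⟩ := prox_key hY hq0 hg hg0 h hd hy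
  obtain ⟨a', b'⟩ := prox_key hY hq0 hg' hg0 h hd' hy'
  simp only at a b a' b'
  rw [a, b, a', b']
end

section
/- Let (P, D) be a horoball family in ℝ^d × ℝ (d ≥ 1). Let λ ∈ (1,2], c ≥ 1, z ∈ ℝ^d, and R > 0. If there exists p₀ ∈ P with c·D(p₀)·R^λ ≥ c²·R^{2λ} + (‖z − p₀‖ + R)², then the set {p ∈ P : ‖p − z‖ ≤ R and c·R^λ ≤ D(p)} has at most one element. -/
/-- The horoball tangent to the boundary `ℝᵈ × {0}` at `(p,0)` with (Euclidean)
diameter `D`: the open Euclidean ball of radius `D/2` centred at `(p, D/2)` in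
`ℝᵈ × ℝ` with the Euclidean norm. -/
def horoball {d : ℕ} (p : EuclideanSpace ℝ (Fin d)) (D : ℝ) :
    Set (EuclideanSpace ℝ (Fin d) × ℝ) :=
  {x : EuclideanSpace ℝ (Fin d) × ℝ | ‖x.1 - p‖ ^ 2 + (x.2 - D / 2) ^ 2 < (D / 2) ^ 2}

theorem horoball_sep {d : ℕ} (p q : EuclideanSpace ℝ (Fin d)) (D E : ℝ) (hD : 0 < D) (hE : 0 < E)
    (h : Disjoint (horoball p D) (horoball q E)) : D * E ≤ ‖q - p‖ ^ 2 := by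
  by_contra! hlt
  obtain ⟨a, ha⟩ : ∃ a, a = D / (D + E) := ⟨_, rfl⟩
  have hS : 0 < D + E := by positivity
  have ha0 : 0 < a := by rw [ha]; positivity
  have haD : a * (D + E) = D := by rw [ha]; field_simp
  have hbE : (1 - a) * (D + E) = E := by linarith
  have hb0 : 0 < 1 - a := by
    by_contra! hb
    nlinarith
  have key : ‖q - p‖ ^ 2 + ((E - D) / 2) ^ 2 < ((D + E) / 2) ^ 2 := by nlinarith
  have hx0 := Set.disjoint_left.mp h
  have hx := @hx0 (p + a • (q - p), D / 2 + a * ((E - D) / 2))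
  refine hx ?_ ?_
  · show ‖p + a • (q - p) - p‖ ^ 2 + (D / 2 + a * ((E - D) / 2) - D / 2) ^ 2 < (D / 2) ^ 2
    have e : p + a • (q - p) - p = a • (q - p) := by abel
    rw [e, norm_smul, mul_pow, Real.norm_eq_abs, sq_abs]
    have := mul_lt_mul_of_pos_left key (pow_pos ha0 2)
    have e2 : a ^ 2 * ((D + E) / 2) ^ 2 = (D / 2) ^ 2 := by
      rw [← mul_pow, ← mul_div_assoc, haD]
    nlinarith
  · show ‖p + a • (q - p) - q‖ ^ 2 + (D / 2 + a * ((E - D) / 2) - E / 2) ^ 2 < (E / 2) ^ 2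
    have e : p + a • (q - p) - q = (-(1 - a)) • (q - p) := by module
    rw [e, norm_smul, mul_pow, Real.norm_eq_abs, sq_abs]
    have := mul_lt_mul_of_pos_left key (pow_pos hb0 2)
    have e2 : (1 - a) ^ 2 * ((D + E) / 2) ^ 2 = (E / 2) ^ 2 := by
      rw [← mul_pow, ← mul_div_assoc, hbE]
    nlinarith

/-- Proximity theorem for an abstract horoball family `(P, D)` in `ℝᵈ × ℝ`:
if `λ ∈ (1,2]`, `c ≥ 1`, `z ∈ ℝᵈ`, `R > 0` and some `p₀ ∈ P` satisfies
`c·D(p₀)·R^λ ≥ c²·R^{2λ} + (‖z − p₀‖ + R)²`, then at most one `p ∈ P` satisfies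
`‖p − z‖ ≤ R` and `c·R^λ ≤ D(p)`. -/
theorem proximityHoroballs {d : ℕ} (hd : 1 ≤ d)
    (P : Set (EuclideanSpace ℝ (Fin d))) (D : EuclideanSpace ℝ (Fin d) → ℝ)
    (hDpos : ∀ p ∈ P, 0 < D p)
    (hdisj : ∀ p ∈ P, ∀ p' ∈ P, p ≠ p' →
      Disjoint (horoball p (D p)) (horoball p' (D p')))
    (lam c : ℝ) (z : EuclideanSpace ℝ (Fin d)) (R : ℝ)
    (hlam : lam ∈ Set.Ioc (1 : ℝ) 2) (hc : 1 ≤ c) (hR : 0 < R)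
    (h : ∃ p₀ ∈ P, c * D p₀ * R ^ lam ≥ c ^ 2 * R ^ (2 * lam) + (‖z - p₀‖ + R) ^ 2) :
    {p ∈ P | ‖p - z‖ ≤ R ∧ c * R ^ lam ≤ D p}.Subsingleton := by
  obtain ⟨p₀, hp₀, h⟩ := h
  have ht : 0 < c * R ^ lam := by positivity
  have e : R ^ (2 * lam) = (R ^ lam) ^ 2 := by
    rw [mul_comm, Real.rpow_mul hR.le]
    norm_cast
  rw [e] at h
  have main : ∀ p ∈ {p ∈ P | ‖p - z‖ ≤ R ∧ c * R ^ lam ≤ D p}, p = p₀ := by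
    rintro p ⟨hp, hpz, hpD⟩
    by_contra hne
    have h1 := horoball_sep p₀ p _ _ (hDpos _ hp₀) (hDpos _ hp) (hdisj _ hp₀ _ hp (Ne.symm hne))
    have h2 : ‖p - p₀‖ ≤ ‖z - p₀‖ + R := by
      have := norm_sub_le_norm_sub_add_norm_sub p z p₀
      linarith
    have h3 : ‖p - p₀‖ ^ 2 ≤ (‖z - p₀‖ + R) ^ 2 := by gcongr
    have h4 := mul_le_mul_of_nonneg_left hpD (hDpos _ hp₀).le
    have h5 := pow_pos ht 2
    nlinarith
  intro p hp q hq
  rw [main p hp, main q hq]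
end

section
/- Let d ≥ 1, let p, p' ∈ ℝ^d and D, D' > 0. If the horoball tangent at p with diameter D and the horoball tangent at p' with diameter D' are disjoint, then ‖p − p'‖² ≥ D·D' (in particular p ≠ p'). -/
/-- Separation of tangency points of disjoint horoballs: if the horoballs tangent at
`p` and `p'` with diameters `D` and `D'` are disjoint, then `‖p − p'‖² ≥ D·D'`;
in particular `p ≠ p'`. -/
theorem disjoint_horoballs_separation {d : ℕ} (hd : 1 ≤ d)
    (p p' : EuclideanSpace ℝ (Fin d)) (D D' : ℝ) (hD : 0 < D) (hD' : 0 < D')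
    (hdisj : Disjoint (horoball p D) (horoball p' D')) :
    D * D' ≤ ‖p - p'‖ ^ 2 ∧ p ≠ p' := by
  have key : D * D' ≤ ‖p - p'‖ ^ 2 := by
    by_contra! h
    have hS : 0 < D + D' := by linarith
    have aux : ∀ t : ℝ, 0 < t →
        t ^ 2 * ‖p - p'‖ ^ 2 + (t * ((D' - D) / 2)) ^ 2 < (t * ((D + D') / 2)) ^ 2 := by
      intro t ht
      have := mul_lt_mul_of_pos_left h (pow_pos ht 2)
      nlinarith
    have h1 := aux (D / (D + D')) (div_pos hD hS)
    have h2 := aux (D' / (D + D')) (div_pos hD' hS)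
    have hne : ∀ x, x ∈ horoball p D → x ∈ horoball p' D' → False :=
      fun x hx hx' => Set.disjoint_left.mp hdisj hx hx'
    refine hne
      ((p - (D / (D + D')) • (p - p'), D / 2 + D / (D + D') * ((D' - D) / 2))) ?_ ?_
    · change ‖p - (D / (D + D')) • (p - p') - p‖ ^ 2
        + (D / 2 + D / (D + D') * ((D' - D) / 2) - D / 2) ^ 2 < (D / 2) ^ 2
      have e1 : p - (D / (D + D')) • (p - p') - p = -((D / (D + D')) • (p - p')) := by abel
      have e3 : D / (D + D') * ((D + D') / 2) = D / 2 := by field_simp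
      rw [e1, norm_neg, norm_smul, mul_pow, Real.norm_eq_abs, sq_abs, add_sub_cancel_left]
      rwa [e3] at h1
    · change ‖p - (D / (D + D')) • (p - p') - p'‖ ^ 2
        + (D / 2 + D / (D + D') * ((D' - D) / 2) - D' / 2) ^ 2 < (D' / 2) ^ 2
      have e0 : D / (D + D') = 1 - D' / (D + D') := by field_simp; ring
      have e1 : p - (D / (D + D')) • (p - p') - p' = (D' / (D + D')) • (p - p') := by
        rw [e0, sub_smul, one_smul]; abel
      have e2 : D / 2 + D / (D + D') * ((D' - D) / 2) - D' / 2
          = -(D' / (D + D') * ((D' - D) / 2)) := by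
        rw [e0]; ring
      have e3 : D' / (D + D') * ((D + D') / 2) = D' / 2 := by field_simp
      rw [e1, e2, norm_smul, mul_pow, Real.norm_eq_abs, sq_abs, neg_sq]
      rwa [e3] at h2
  refine ⟨key, ?_⟩
  rintro rfl
  have := mul_pos hD hD'
  simp at key
  linarith
end
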